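/- For every integer n ≥ 3, the secure domination number of the flower snark J_n equals ⌈(3n+1)/2⌉. -/

import Mathlib

/-- Vertices of the flower snark `J_n`: a copy index `i : Fin n` together with
one of the four vertices of the copy: `0 = a`, `1 = b`, `2 = c`, `3 = d`. -/
abbrev FV (n : ℕ) := Fin n × Fin 4

/-- The flower snark `J_n`: in each copy, `a^i` is adjacent to `b^i, c^i, d^i`;
the `b` vertices form an `n`-cycle; the `c` and `d` vertices form a `2n`-cycle
via the paths `c^i c^{i+1}`, `d^i d^{i+1}` (for `1 ≤ i ≤ n-1`) together with the
twist edges `c^n d^1` and `d^n c^1`. -/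
def flowerSnark (n : ℕ) : SimpleGraph (FV n) :=
  SimpleGraph.fromRel (fun v w =>
    (v.1 = w.1 ∧ v.2 = 0 ∧ w.2 ≠ 0) ∨
    (((v.1 : ℕ) + 1) % n = (w.1 : ℕ) ∧ v.2 = 1 ∧ w.2 = 1) ∨
    ((v.1 : ℕ) + 1 = (w.1 : ℕ) ∧ v.2 = 2 ∧ w.2 = 2) ∨
    ((v.1 : ℕ) + 1 = (w.1 : ℕ) ∧ v.2 = 3 ∧ w.2 = 3) ∨
    ((v.1 : ℕ) = n - 1 ∧ (w.1 : ℕ) = 0 ∧ v.2 = 2 ∧ w.2 = 3) ∨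
    ((v.1 : ℕ) = n - 1 ∧ (w.1 : ℕ) = 0 ∧ v.2 = 3 ∧ w.2 = 2))

/-- `S` is a dominating set of `J_n`. -/
def Dominating (n : ℕ) (S : Set (FV n)) : Prop :=
  ∀ v ∉ S, ∃ w ∈ S, (flowerSnark n).Adj v w

/-- `S` is a minimal dominating set of `J_n`. -/
def MinimalDominating (n : ℕ) (S : Set (FV n)) : Prop :=
  Dominating n S ∧ ∀ T : Set (FV n), T ⊂ S → ¬ Dominating n T

/-- `S` is an independent set of `J_n`. -/
def IndependentSet (n : ℕ) (S : Set (FV n)) : Prop :=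
  ∀ v ∈ S, ∀ w ∈ S, ¬ (flowerSnark n).Adj v w

/-- `S` is a 2-dominating set of `J_n`: every vertex outside `S` has at least
two neighbours in `S`. -/
def TwoDominating (n : ℕ) (S : Set (FV n)) : Prop :=
  ∀ v ∉ S, ∃ w₁ ∈ S, ∃ w₂ ∈ S, w₁ ≠ w₂ ∧
    (flowerSnark n).Adj v w₁ ∧ (flowerSnark n).Adj v w₂

/-- `S` is a total dominating set of `J_n`. -/
def TotalDominating (n : ℕ) (S : Set (FV n)) : Prop :=
  ∀ v : FV n, ∃ w ∈ S, (flowerSnark n).Adj v w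

/-- `S` is a connected dominating set of `J_n`. -/
def ConnectedDominating (n : ℕ) (S : Set (FV n)) : Prop :=
  Dominating n S ∧ ((flowerSnark n).induce S).Connected

/-- `S` is a secure dominating set of `J_n`. -/
def SecureDominating (n : ℕ) (S : Set (FV n)) : Prop :=
  Dominating n S ∧ ∀ v ∉ S, ∃ w ∈ S,
    (flowerSnark n).Adj v w ∧ Dominating n (insert v (S \ {w}))

/-- `v` is undefended with respect to `f`: neither `v` nor any of its
neighbours carries a guard. -/
def Undefended (n : ℕ) (f : FV n → ℕ) (v : FV n) : Prop :=
  f v = 0 ∧ ∀ w, (flowerSnark n).Adj v w → f w = 0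

/-- `f` is a weak Roman dominating function on `J_n`: `f` takes values in
`{0,1,2}`, has no undefended vertex, and every vertex `v` with `f v = 0` has a
neighbour `w` with `f w ≥ 1` such that moving one guard from `w` to `v` leaves
no undefended vertex. -/
def WeakRomanDominating (n : ℕ) (f : FV n → ℕ) : Prop :=
  (∀ v, f v ≤ 2) ∧ (∀ v, ¬ Undefended n f v) ∧
  ∀ v, f v = 0 → ∃ w, (flowerSnark n).Adj v w ∧ 1 ≤ f w ∧
    ∀ u, ¬ Undefended n
      (fun x => if x = v then 1 else if x = w then f w - 1 else f x) u

/-- The domination number of `J_n`. -/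
noncomputable def dominationNumber (n : ℕ) : ℕ :=
  sInf {k | ∃ S : Set (FV n), Dominating n S ∧ S.ncard = k}

/-- The independent domination number of `J_n`. -/
noncomputable def indepDominationNumber (n : ℕ) : ℕ :=
  sInf {k | ∃ S : Set (FV n), Dominating n S ∧ IndependentSet n S ∧ S.ncard = k}

/-- The upper domination number of `J_n`: the maximum cardinality of a minimal
dominating set. -/
noncomputable def upperDominationNumber (n : ℕ) : ℕ :=
  sSup {k | ∃ S : Set (FV n), MinimalDominating n S ∧ S.ncard = k}

/-- The 2-domination number of `J_n`. -/
noncomputable def twoDominationNumber (n : ℕ) : ℕ :=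
  sInf {k | ∃ S : Set (FV n), TwoDominating n S ∧ S.ncard = k}

/-- The total domination number of `J_n`. -/
noncomputable def totalDominationNumber (n : ℕ) : ℕ :=
  sInf {k | ∃ S : Set (FV n), TotalDominating n S ∧ S.ncard = k}

/-- The connected domination number of `J_n`. -/
noncomputable def connectedDominationNumber (n : ℕ) : ℕ :=
  sInf {k | ∃ S : Set (FV n), ConnectedDominating n S ∧ S.ncard = k}

/-- The secure domination number of `J_n`. -/
noncomputable def secureDominationNumber (n : ℕ) : ℕ :=
  sInf {k | ∃ S : Set (FV n), SecureDominating n S ∧ S.ncard = k}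

/-- The weak Roman domination number of `J_n`. -/
noncomputable def weakRomanDominationNumber (n : ℕ) : ℕ :=
  sInf {k | ∃ f : FV n → ℕ, WeakRomanDominating n f ∧ ∑ v, f v = k}

/-- The weight of the copy `J^(m mod n)` in a vertex set `S`, i.e. the number
of vertices of `S` among `a, b, c, d` of that copy. -/
noncomputable def copyWeight {n : ℕ} (S : Set (FV n)) (m : ℕ) : ℕ :=
  (S ∩ {v : FV n | (v.1 : ℕ) = m % n}).ncard

/-- The weight of the copy `J^(m mod n)` in a function `f`, i.e.
`f a + f b + f c + f d` over that copy. -/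
def fCopyWeight {n : ℕ} (f : FV n → ℕ) (m : ℕ) : ℕ :=
  ∑ v ∈ Finset.univ.filter (fun v : FV n => (v.1 : ℕ) = m % n), f v

/-- Vertex labels: `A`, `B` are guarded vertices without / with an external private
neighbour, `P`, `D` are unguarded vertices with one / several guarded neighbours. -/
inductive Lab
  | A
  | B
  | P
  | D
deriving DecidableEq

namespace Lab

def isS : Lab → Bool
  | A => true
  | B => true
  | _ => false

def isP : Lab → Bool
  | P => true
  | _ => false

def isA : Lab → Bool
  | A => true
  | _ => false

/-- at most one of three -/
def am1 (x y z : Bool) : Bool := bif x then !(y || z) else !(y && z)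

/-- Local condition at a vertex labelled `l` with neighbours labelled `x y z`. -/
def okv (l x y z : Lab) : Bool :=
  match l with
  | A => !(x.isP || y.isP || z.isP)
  | B => am1 x.isP y.isP z.isP
  | P => (x.isS || y.isS || z.isS) && am1 x.isS y.isS z.isS && !(x.isA || y.isA || z.isA)
  | D => !(am1 x.isS y.isS z.isS) && (x.isA || y.isA || z.isA)

theorem forall_iff (p : Lab → Prop) : (∀ x, p x) ↔ p A ∧ p B ∧ p P ∧ p D :=
  ⟨fun h => ⟨h _, h _, h _, h _⟩, fun h x => by cases x <;> simp [h]⟩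

instance decForall (p : Lab → Prop) [DecidablePred p] : Decidable (∀ x, p x) :=
  decidable_of_iff _ (forall_iff p).symm

theorem okv_of : ∀ l x y z : Lab,
    (l = A → x ≠ P ∧ y ≠ P ∧ z ≠ P) →
    (l = B → ¬ (x = P ∧ y = P) ∧ ¬ (x = P ∧ z = P) ∧ ¬ (y = P ∧ z = P)) →
    (l = P → (x = B ∧ y.isS = false ∧ z.isS = false) ∨ (y = B ∧ x.isS = false ∧ z.isS = false) ∨
      (z = B ∧ x.isS = false ∧ y.isS = false)) →
    (l = D → (x = A ∧ (y.isS = true ∨ z.isS = true)) ∨ (y = A ∧ (x.isS = true ∨ z.isS = true)) ∨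
      (z = A ∧ (x.isS = true ∨ y.isS = true))) → okv l x y z = true := by
  intro l x y z
  cases l <;> cases x <;> cases y <;> cases z <;> simp [okv, isS, isP, isA, am1]

theorem okv_A : ∀ x y z : Lab, okv A x y z = true → x ≠ P ∧ y ≠ P ∧ z ≠ P := by decide
theorem okv_B : ∀ x y z : Lab, okv B x y z = true →
    ¬ (x = P ∧ y = P) ∧ ¬ (x = P ∧ z = P) ∧ ¬ (y = P ∧ z = P) := by decide
theorem okv_P : ∀ x y z : Lab, okv P x y z = true → x = B ∨ y = B ∨ z = B := by decide
theorem okv_D : ∀ x y z : Lab, okv D x y z = true → (x = A ∨ y = A ∨ z = A) ∧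
    ((x.isS = true ∧ y.isS = true) ∨ (x.isS = true ∧ z.isS = true) ∨
      (y.isS = true ∧ z.isS = true)) := by decide

end Lab

/-- `x, y, z` are the three distinct neighbours of `v`. -/
def Nb (n : ℕ) (v x y z : FV n) : Prop :=
  (∀ w, (flowerSnark n).Adj v w ↔ w = x ∨ w = y ∨ w = z) ∧ x ≠ y ∧ x ≠ z ∧ y ≠ z

theorem secure_of_lab (n : ℕ) (f : FV n → Lab)
    (hf : ∀ v, ∃ x y z, Nb n v x y z ∧ Lab.okv (f v) (f x) (f y) (f z) = true) :
    SecureDominating n {v | (f v).isS = true} := by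
  have f1 : ∀ v, f v = .P → ∃ w, (flowerSnark n).Adj v w ∧ f w = .B := by
    intro v hv
    obtain ⟨x, y, z, ⟨hN, -⟩, h⟩ := hf v
    rw [hv] at h
    rcases Lab.okv_P _ _ _ h with h | h | h
    · exact ⟨x, by simp [hN], h⟩
    · exact ⟨y, by simp [hN], h⟩
    · exact ⟨z, by simp [hN], h⟩
  have f2 : ∀ v, f v = .D → (∃ w, (flowerSnark n).Adj v w ∧ f w = .A) ∧
      ∀ w, ∃ w', w' ≠ w ∧ (flowerSnark n).Adj v w' ∧ (f w').isS = true := by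
    intro v hv
    obtain ⟨x, y, z, ⟨hN, h1, h2, h3⟩, h⟩ := hf v
    rw [hv] at h
    obtain ⟨ha, hb⟩ := Lab.okv_D _ _ _ h
    constructor
    · rcases ha with h | h | h
      · exact ⟨x, by simp [hN], h⟩
      · exact ⟨y, by simp [hN], h⟩
      · exact ⟨z, by simp [hN], h⟩
    · intro w
      have key : ∀ p q, p ≠ q → (flowerSnark n).Adj v p → (flowerSnark n).Adj v q →
          (f p).isS = true → (f q).isS = true →
          ∃ w', w' ≠ w ∧ (flowerSnark n).Adj v w' ∧ (f w').isS = true := by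
        intro p q hpq hp hq sp sq
        by_cases e : p = w
        · exact ⟨q, by rw [← e]; exact hpq.symm, hq, sq⟩
        · exact ⟨p, e, hp, sp⟩
      rcases hb with ⟨s, t⟩ | ⟨s, t⟩ | ⟨s, t⟩
      · exact key x y h1 (by simp [hN]) (by simp [hN]) s t
      · exact key x z h2 (by simp [hN]) (by simp [hN]) s t
      · exact key y z h3 (by simp [hN]) (by simp [hN]) s t
  have f3 : ∀ v, f v = .A → ∀ u, (flowerSnark n).Adj v u → f u ≠ .P := by
    intro v hv u hu
    obtain ⟨x, y, z, ⟨hN, -⟩, h⟩ := hf v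
    rw [hv] at h
    obtain ⟨a, b, c⟩ := Lab.okv_A _ _ _ h
    rcases (hN u).1 hu with rfl | rfl | rfl <;> assumption
  have f4 : ∀ v, f v = .B → ∀ u u', (flowerSnark n).Adj v u → (flowerSnark n).Adj v u' →
      f u = .P → f u' = .P → u = u' := by
    intro v hv u u' hu hu' p p'
    obtain ⟨x, y, z, ⟨hN, -⟩, h⟩ := hf v
    rw [hv] at h
    obtain ⟨a, b, c⟩ := Lab.okv_B _ _ _ h
    rcases (hN u).1 hu with rfl | rfl | rfl <;> rcases (hN u').1 hu' with rfl | rfl | rfl <;>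
      simp_all
  have cs : ∀ v, (f v).isS ≠ true → f v = .P ∨ f v = .D := by
    intro v hv
    cases h : f v <;> simp_all [Lab.isS]
  refine ⟨?_, ?_⟩
  · intro v hv
    rcases cs v hv with h | h
    · obtain ⟨w, hw, e⟩ := f1 v h
      exact ⟨w, by simp [e, Lab.isS], hw⟩
    · obtain ⟨w, hw, e⟩ := (f2 v h).1
      exact ⟨w, by simp [e, Lab.isS], hw⟩
  · intro v hv
    obtain ⟨w, hw, hwS, hwP⟩ : ∃ w, (flowerSnark n).Adj v w ∧ (f w).isS = true ∧
        ∀ u, f u = .P → u ≠ v → ∃ w', w' ≠ w ∧ (flowerSnark n).Adj u w' ∧ (f w').isS = true := by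
      rcases cs v hv with h | h
      · obtain ⟨w, hw, e⟩ := f1 v h
        refine ⟨w, hw, by simp [e, Lab.isS], ?_⟩
        intro u hu huv
        obtain ⟨w', hw', e'⟩ := f1 u hu
        refine ⟨w', ?_, hw', by simp [e', Lab.isS]⟩
        rintro rfl
        exact huv (f4 w' e _ _ hw'.symm hw.symm hu h)
      · obtain ⟨w, hw, e⟩ := (f2 v h).1
        refine ⟨w, hw, by simp [e, Lab.isS], ?_⟩
        intro u hu huv
        obtain ⟨w', hw', e'⟩ := f1 u hu
        refine ⟨w', ?_, hw', by simp [e', Lab.isS]⟩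
        rintro rfl
        simp [e] at e'
    refine ⟨w, hwS, hw, ?_⟩
    intro u hu
    have huv : u ≠ v := by rintro rfl; simp at hu
    by_cases huw : u = w
    · exact ⟨v, by simp, by rw [huw]; exact hw.symm⟩
    · have huS : (f u).isS ≠ true := by
        intro h; apply hu; right; exact ⟨h, huw⟩
      have : ∃ w', w' ≠ w ∧ (flowerSnark n).Adj u w' ∧ (f w').isS = true := by
        rcases cs u huS with h | h
        · exact hwP u h huv
        · exact (f2 u h).2 w
      obtain ⟨w', h1, h2, h3⟩ := this
      exact ⟨w', Or.inr ⟨h3, h1⟩, h2⟩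

theorem ite4 (p q r : Prop) [Decidable p] [Decidable q] [Decidable r] (L : Lab)
    (hL : L = if p then (if q then .B else .A) else if r then .P else .D) :
    (L = .A ↔ p ∧ ¬ q) ∧ (L = .B ↔ p ∧ q) ∧ (L = .P ↔ ¬ p ∧ r) ∧ (L = .D ↔ ¬ p ∧ ¬ r) := by
  subst hL
  by_cases p <;> by_cases q <;> by_cases r <;> simp [*]

open Classical in
/-- The label of a vertex with respect to `S`. -/
noncomputable def labV (n : ℕ) (S : Set (FV n)) (v : FV n) : Lab :=
  if v ∈ S then
    (if ∃ u, u ∉ S ∧ (flowerSnark n).Adj v u ∧ ∀ w ∈ S, (flowerSnark n).Adj u w → w = v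
      then .B else .A)
  else if ∃ w ∈ S, (flowerSnark n).Adj v w ∧ ∀ w' ∈ S, (flowerSnark n).Adj v w' → w' = w
    then .P else .D

theorem labV_isS (n : ℕ) (S : Set (FV n)) (v : FV n) : (labV n S v).isS = true ↔ v ∈ S := by
  unfold labV
  split_ifs <;> simp_all [Lab.isS]

theorem labV_okv (n : ℕ) (S : Set (FV n)) (hS : SecureDominating n S)
    (htf : ∀ v x y, (flowerSnark n).Adj v x → (flowerSnark n).Adj v y → ¬ (flowerSnark n).Adj x y)
    (v x y z : FV n) (h : Nb n v x y z) :
    Lab.okv (labV n S v) (labV n S x) (labV n S y) (labV n S z) = true := by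
  classical
  obtain ⟨hN, hxy, hxz, hyz⟩ := h
  have ax : (flowerSnark n).Adj v x := by simp [hN]
  have ay : (flowerSnark n).Adj v y := by simp [hN]
  have az : (flowerSnark n).Adj v z := by simp [hN]
  have hA : ∀ v, labV n S v = .A ↔ v ∈ S ∧
      ¬ ∃ u, u ∉ S ∧ (flowerSnark n).Adj v u ∧ ∀ w ∈ S, (flowerSnark n).Adj u w → w = v :=
    fun v => (ite4 _ _ _ (labV n S v) rfl).1
  have hB : ∀ v, labV n S v = .B ↔ v ∈ S ∧
      ∃ u, u ∉ S ∧ (flowerSnark n).Adj v u ∧ ∀ w ∈ S, (flowerSnark n).Adj u w → w = v :=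
    fun v => (ite4 _ _ _ (labV n S v) rfl).2.1
  have hP : ∀ v, labV n S v = .P ↔ v ∉ S ∧
      ∃ w ∈ S, (flowerSnark n).Adj v w ∧ ∀ w' ∈ S, (flowerSnark n).Adj v w' → w' = w :=
    fun v => (ite4 _ _ _ (labV n S v) rfl).2.2.1
  have hD : ∀ v, labV n S v = .D ↔ v ∉ S ∧
      ¬ ∃ w ∈ S, (flowerSnark n).Adj v w ∧ ∀ w' ∈ S, (flowerSnark n).Adj v w' → w' = w :=
    fun v => (ite4 _ _ _ (labV n S v) rfl).2.2.2
  have hns : ∀ v, (labV n S v).isS = false ↔ v ∉ S := by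
    intro v; rw [← labV_isS n S v]; simp
  apply Lab.okv_of
  · intro h
    rw [hA] at h
    have : ∀ u, (flowerSnark n).Adj v u → labV n S u ≠ .P := by
      intro u hu hp
      rw [hP] at hp
      obtain ⟨h1, w, hw, h2, h3⟩ := hp
      have e := h3 v h.1 hu.symm
      subst e
      exact h.2 ⟨u, h1, hu, h3⟩
    exact ⟨this _ ax, this _ ay, this _ az⟩
  · intro h
    rw [hB] at h
    have : ∀ p q, p ≠ q → (flowerSnark n).Adj v p → (flowerSnark n).Adj v q →
        ¬ (labV n S p = .P ∧ labV n S q = .P) := by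
      rintro p q hpq hp hq ⟨Pp, Pq⟩
      rw [hP] at Pp Pq
      obtain ⟨p1, w, hw, p2, p3⟩ := Pp
      have e := p3 v h.1 hp.symm
      subst e
      obtain ⟨q1, w, hw, q2, q3⟩ := Pq
      have e := q3 v h.1 hq.symm
      subst e
      obtain ⟨t, tS, t1, t2⟩ := hS.2 p p1
      have e := p3 t tS t1
      subst e
      obtain ⟨s, s1, s2⟩ := t2 q (by
        rintro (r | r)
        · exact hpq r.symm
        · exact q1 r.1)
      rcases s1 with r | r
      · subst r
        exact htf _ _ _ hq hp s2
      · exact r.2 (q3 s r.1 s2)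
    exact ⟨this _ _ hxy ax ay, this _ _ hxz ax az, this _ _ hyz ay az⟩
  · intro h
    rw [hP] at h
    obtain ⟨h1, w, wS, h2, h3⟩ := h
    have wB : labV n S w = .B := (hB w).2 ⟨wS, v, h1, h2.symm, h3⟩
    simp only [hns]
    rcases (hN w).1 h2 with rfl | rfl | rfl
    · exact Or.inl ⟨wB, fun s => hxy (h3 _ s ay).symm, fun s => hxz (h3 _ s az).symm⟩
    · exact Or.inr (Or.inl ⟨wB, fun s => hxy (h3 _ s ax), fun s => hyz (h3 _ s az).symm⟩)
    · exact Or.inr (Or.inr ⟨wB, fun s => hxz (h3 _ s ax), fun s => hyz (h3 _ s ay)⟩)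
  · intro h
    rw [hD] at h
    obtain ⟨h1, h2⟩ := h
    obtain ⟨w, wS, hw, hdom⟩ := hS.2 v h1
    have wA : labV n S w = .A := by
      rw [hA]
      refine ⟨wS, ?_⟩
      rintro ⟨u, uS, hu, hu2⟩
      by_cases e : u = v
      · subst e
        exact h2 ⟨w, wS, hu.symm, hu2⟩
      · obtain ⟨s, s1, s2⟩ := hdom u (by
          rintro (r | r)
          · exact e r
          · exact uS r.1)
        rcases s1 with r | r
        · subst r
          exact htf _ _ _ hu hw.symm s2
        · exact r.2 (hu2 s r.1 s2)
    have h3 : ∃ w', w' ∈ S ∧ (flowerSnark n).Adj v w' ∧ w' ≠ w := by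
      by_contra hc
      push Not at hc
      exact h2 ⟨w, wS, hw, hc⟩
    obtain ⟨w', w'S, hw', hne⟩ := h3
    simp only [labV_isS]
    rcases (hN w).1 hw with rfl | rfl | rfl <;> rcases (hN w').1 hw' with rfl | rfl | rfl <;>
      first
      | exact absurd rfl hne
      | exact Or.inl ⟨wA, Or.inl w'S⟩
      | exact Or.inl ⟨wA, Or.inr w'S⟩
      | exact Or.inr (Or.inl ⟨wA, Or.inl w'S⟩)
      | exact Or.inr (Or.inl ⟨wA, Or.inr w'S⟩)
      | exact Or.inr (Or.inr ⟨wA, Or.inl w'S⟩)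
      | exact Or.inr (Or.inr ⟨wA, Or.inr w'S⟩)

/-- exchange of `c` and `d` -/
def sw4 (k : Fin 4) : Fin 4 := ![0, 1, 3, 2] k

def tw (e : ℕ) (k : Fin 4) : Fin 4 := if e % 2 = 1 then sw4 k else k

/-- The covering strip. -/
def cv (n : ℕ) (hn : 0 < n) (i : ℕ) (k : Fin 4) : FV n := (⟨i % n, Nat.mod_lt _ hn⟩, tw (i / n) k)

theorem sw4_sw4 (k : Fin 4) : sw4 (sw4 k) = k := by revert k; decide

theorem tw_succ (e : ℕ) (k : Fin 4) : tw (e + 1) k = tw e (sw4 k) := by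
  unfold tw
  rcases Nat.mod_two_eq_zero_or_one e with h | h
  · have : (e + 1) % 2 = 1 := by omega
    simp [h, this]
  · have : (e + 1) % 2 = 0 := by omega
    simp [h, this, sw4_sw4]

theorem tw_zero_iff (e : ℕ) (k : Fin 4) : tw e k = 0 ↔ k = 0 := by
  unfold tw
  split_ifs
  · revert k; decide
  · rfl

theorem tw_zero (e : ℕ) : tw e 0 = 0 := (tw_zero_iff e 0).2 rfl

theorem cv_add (n : ℕ) (hn : 0 < n) (i : ℕ) (k : Fin 4) :
    cv n hn (i + n) k = cv n hn i (sw4 k) := by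
  unfold cv
  rw [Nat.add_div_right _ hn, tw_succ]
  simp

theorem cv_small (n : ℕ) (hn : 0 < n) (i : Fin n) (k : Fin 4) :
    cv n hn i k = (i, k) := by
  unfold cv
  rw [Nat.div_eq_of_lt i.2]
  ext <;> simp [tw, Nat.mod_eq_of_lt i.2]

theorem cv_surj (n : ℕ) (hn : 0 < n) (v : FV n) : ∃ i k, v = cv n hn (i + 1) k := by
  refine ⟨v.1 + n - 1, sw4 v.2, ?_⟩
  have : (v.1 : ℕ) + n - 1 + 1 = v.1 + n := by omega
  rw [this, cv_add, sw4_sw4, cv_small]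

/-- the directed "next copy" relation -/
def stepR (n : ℕ) (v w : FV n) : Prop :=
    (((v.1 : ℕ) + 1) % n = (w.1 : ℕ) ∧ v.2 = 1 ∧ w.2 = 1) ∨
    ((v.1 : ℕ) + 1 = (w.1 : ℕ) ∧ v.2 = 2 ∧ w.2 = 2) ∨
    ((v.1 : ℕ) + 1 = (w.1 : ℕ) ∧ v.2 = 3 ∧ w.2 = 3) ∨
    ((v.1 : ℕ) = n - 1 ∧ (w.1 : ℕ) = 0 ∧ v.2 = 2 ∧ w.2 = 3) ∨
    ((v.1 : ℕ) = n - 1 ∧ (w.1 : ℕ) = 0 ∧ v.2 = 3 ∧ w.2 = 2)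

/-- explicit next vertex -/
theorem stepR_iff (n : ℕ) (hn : 2 ≤ n) (v w : FV n) : stepR n v w ↔
    v.2 ≠ 0 ∧ ((v.1.1 + 1 = w.1.1 ∧ w.2 = v.2) ∨ (v.1.1 + 1 = n ∧ w.1.1 = 0 ∧ w.2 = sw4 v.2)) := by
  obtain ⟨⟨i, hi⟩, k⟩ := v
  obtain ⟨⟨j, hj⟩, l⟩ := w
  have hm : (i + 1) % n = j ↔ (i + 1 = j ∨ (i + 1 = n ∧ j = 0)) := by
    rcases Nat.lt_or_ge (i + 1) n with h | h
    · rw [Nat.mod_eq_of_lt h]; omega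
    · have : i + 1 = n := by omega
      rw [this, Nat.mod_self]; omega
  simp only [stepR, hm]
  have h2 : i = n - 1 ↔ i + 1 = n := by omega
  rw [h2]
  clear hm h2
  fin_cases k <;> fin_cases l <;> simp [sw4]

theorem mod_step (n : ℕ) (hn : 2 ≤ n) (i : ℕ) :
    (i % n + 1 < n ∧ (i + 1) % n = i % n + 1 ∧ (i + 1) / n = i / n) ∨
    (i % n + 1 = n ∧ (i + 1) % n = 0 ∧ (i + 1) / n = i / n + 1) := by
  have h1 := Nat.div_add_mod i n
  have h0 : i % n < n := Nat.mod_lt _ (by omega)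
  rcases Nat.lt_or_ge (i % n + 1) n with h | h
  · left
    have e : i + 1 = i % n + 1 + n * (i / n) := by omega
    refine ⟨h, ?_, ?_⟩
    · rw [e, Nat.add_mul_mod_self_left, Nat.mod_eq_of_lt h]
    · rw [e, Nat.add_mul_div_left _ _ (by omega), Nat.div_eq_of_lt h]; simp
  · right
    have h2 : i % n + 1 = n := by omega
    have e : i + 1 = 0 + n * (i / n + 1) := by rw [Nat.mul_add]; omega
    refine ⟨h2, ?_, ?_⟩
    · rw [e, Nat.add_mul_mod_self_left]; simp
    · rw [e, Nat.add_mul_div_left _ _ (by omega)]; simp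

theorem tw_inj (e : ℕ) {k l : Fin 4} (h : tw e k = tw e l) : k = l := by
  unfold tw at h
  split_ifs at h
  · rw [← sw4_sw4 k, h, sw4_sw4]
  · exact h

theorem sw4_tw (e : ℕ) (k : Fin 4) : sw4 (tw e k) = tw (e + 1) k := by
  rw [tw_succ]; unfold tw; split_ifs <;> rfl

theorem step_next (n : ℕ) (hn : 2 ≤ n) (i : ℕ) (k : Fin 4) (hk : k ≠ 0) (w : FV n) :
    stepR n (cv n (by omega) i k) w ↔ w = cv n (by omega) (i + 1) k := by
  rw [stepR_iff n hn]
  obtain ⟨⟨j, hj⟩, l⟩ := w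
  have hk' : tw (i / n) k ≠ 0 := fun h => hk ((tw_zero_iff _ _).1 h)
  simp only [cv, Prod.mk.injEq, Fin.mk.injEq, ne_eq, hk', not_false_eq_true, true_and]
  rcases mod_step n hn i with ⟨h1, h2, h3⟩ | ⟨h1, h2, h3⟩
  · rw [h2, h3]
    constructor
    · rintro (⟨a, b⟩ | ⟨a, b⟩)
      · exact ⟨a.symm, b⟩
      · omega
    · rintro ⟨a, b⟩; exact Or.inl ⟨a.symm, b⟩
  · rw [h2, h3, sw4_tw]
    constructor
    · rintro (⟨a, b⟩ | ⟨a, b⟩)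
      · omega
      · exact b
    · intro a; exact Or.inr ⟨h1, a⟩

theorem step_prev (n : ℕ) (hn : 2 ≤ n) (i : ℕ) (k : Fin 4) (hk : k ≠ 0) (w : FV n) :
    stepR n w (cv n (by omega) (i + 1) k) ↔ w = cv n (by omega) i k := by
  constructor
  · intro h
    rw [stepR_iff n hn] at h
    obtain ⟨⟨j, hj⟩, l⟩ := w
    simp only [cv, Prod.mk.injEq, Fin.mk.injEq] at h ⊢
    rcases mod_step n hn i with ⟨h1, h2, h3⟩ | ⟨h1, h2, h3⟩
    · rw [h2, h3] at h
      rcases h with ⟨-, ⟨a, b⟩ | ⟨a, b, c⟩⟩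
      · exact ⟨by omega, b.symm⟩
      · omega
    · rw [h2, h3] at h
      rcases h with ⟨-, ⟨a, b⟩ | ⟨a, b, c⟩⟩
      · omega
      · refine ⟨by omega, ?_⟩
        rw [← sw4_tw] at c
        rw [← sw4_sw4 l, ← c, sw4_sw4]
  · rintro rfl
    rw [step_next n hn i k hk]

theorem adj_iff (n : ℕ) (v w : FV n) : (flowerSnark n).Adj v w ↔
    v ≠ w ∧ (((v.1 = w.1 ∧ v.2 = 0 ∧ w.2 ≠ 0) ∨ stepR n v w) ∨
      ((w.1 = v.1 ∧ w.2 = 0 ∧ v.2 ≠ 0) ∨ stepR n w v)) := by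
  unfold flowerSnark stepR
  rw [SimpleGraph.fromRel_adj]

theorem stepR_ne (n : ℕ) (hn : 2 ≤ n) (v w : FV n) (h : stepR n v w) :
    v ≠ w ∧ v.2 ≠ 0 ∧ w.2 ≠ 0 := by
  rw [stepR_iff n hn] at h
  obtain ⟨h0, h⟩ := h
  refine ⟨?_, h0, ?_⟩
  · rintro rfl
    rcases h with h | h <;> omega
  · rcases h with h | h
    · rw [h.2]; exact h0
    · rw [h.2.2]
      intro e
      apply h0
      rw [← sw4_sw4 v.2, e]; rfl

theorem nb_a (n : ℕ) (hn : 2 ≤ n) (i : ℕ) : Nb n (cv n (by omega) i 0) (cv n (by omega) i 1)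
    (cv n (by omega) i 2) (cv n (by omega) i 3) := by
  have ne : ∀ k l : Fin 4, k ≠ l → cv n (by omega) i k ≠ cv n (by omega) i l := by
    intro k l h e
    exact h (tw_inj _ (congrArg Prod.snd e))
  refine ⟨?_, ne _ _ (by decide), ne _ _ (by decide), ne _ _ (by decide)⟩
  intro w
  have hz : (cv n (by omega) i 0).2 = 0 := tw_zero _
  rw [adj_iff]
  constructor
  · rintro ⟨h1, (h | h) | (h | h)⟩
    · obtain ⟨j, l⟩ := w
      obtain ⟨h2, -, h3⟩ := h
      simp only [cv] at h2 h3
      subst h2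
      simp only [cv, Prod.mk.injEq, true_and]
      clear h1
      unfold tw
      split_ifs
      · revert h3; revert l; simp only [sw4]; decide
      · revert h3; revert l; decide
    · exact absurd hz (stepR_ne n hn _ _ h).2.1
    · exact absurd hz h.2.2
    · exact absurd hz (stepR_ne n hn _ _ h).2.2
  · intro h
    have : ∃ k, k ≠ 0 ∧ w = cv n (by omega) i k := by
      rcases h with h | h | h
      · exact ⟨1, by decide, h⟩
      · exact ⟨2, by decide, h⟩
      · exact ⟨3, by decide, h⟩
    obtain ⟨k, hk, rfl⟩ := this
    exact ⟨ne _ _ hk.symm, Or.inl (Or.inl ⟨rfl, hz, fun e => hk ((tw_zero_iff _ _).1 e)⟩)⟩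

theorem nb_k (n : ℕ) (hn : 3 ≤ n) (i : ℕ) (k : Fin 4) (hk : k ≠ 0) :
    Nb n (cv n (by omega) (i + 1) k) (cv n (by omega) (i + 1) 0)
    (cv n (by omega) i k) (cv n (by omega) (i + 2) k) := by
  have hn2 : 2 ≤ n := by omega
  have hz : ∀ i, (cv n (by omega) i 0).2 = 0 := fun i => tw_zero _
  have hz' : ∀ i, (cv n (by omega) i k).2 ≠ 0 := fun i e => hk ((tw_zero_iff _ _).1 e)
  have s1 := (step_next n hn2 i k hk _).2 rfl
  have s2 := (step_next n hn2 (i + 1) k hk _).2 rfl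
  refine ⟨?_, ?_, ?_, ?_⟩
  · intro w
    rw [adj_iff]
    constructor
    · rintro ⟨h1, (h | h) | (h | h)⟩
      · exact absurd h.2.1 (hz' _)
      · exact Or.inr (Or.inr ((step_next n hn2 (i + 1) k hk _).1 h))
      · left
        exact Prod.ext h.1 (by rw [h.2.1, hz])
      · exact Or.inr (Or.inl ((step_prev n hn2 i k hk _).1 h))
    · rintro (rfl | rfl | rfl)
      · exact ⟨fun e => hz' (i + 1) (by rw [e, hz]), Or.inr (Or.inl ⟨rfl, hz _, hz' _⟩)⟩
      · exact ⟨(stepR_ne n hn2 _ _ s1).1.symm, Or.inr (Or.inr s1)⟩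
      · exact ⟨(stepR_ne n hn2 _ _ s2).1, Or.inl (Or.inr s2)⟩
  · intro e; exact hz' i (by rw [← e, hz])
  · intro e; exact hz' (i + 2) (by rw [← e, hz])
  · intro e
    have e1 : i % n = (i + 1 + 1) % n := congrArg (fun v : FV n => v.1.1) e
    rcases mod_step n hn2 i with h | h <;> rcases mod_step n hn2 (i + 1) with h' | h' <;> omega

theorem no_tri (n : ℕ) (hn : 4 ≤ n) : ∀ v x y, (flowerSnark n).Adj v x → (flowerSnark n).Adj v y →
    ¬ (flowerSnark n).Adj x y := by
  have key : ∀ v w, (flowerSnark n).Adj v w →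
      (v.2 = 0 ∧ w.2 ≠ 0 ∧ v.1.1 = w.1.1) ∨ (w.2 = 0 ∧ v.2 ≠ 0 ∧ v.1.1 = w.1.1) ∨
      (v.2 ≠ 0 ∧ w.2 ≠ 0 ∧ (v.1.1 + 1 = w.1.1 ∨ w.1.1 + 1 = v.1.1 ∨ (v.1.1 + 1 = n ∧ w.1.1 = 0) ∨
        (w.1.1 + 1 = n ∧ v.1.1 = 0))) := by
    intro v w h
    rw [adj_iff] at h
    obtain ⟨-, (h | h) | (h | h)⟩ := h
    · exact Or.inl ⟨h.2.1, h.2.2, congrArg Fin.val h.1⟩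
    · have := stepR_ne n (by omega) _ _ h
      rw [stepR_iff n (by omega)] at h
      exact Or.inr (Or.inr ⟨this.2.1, this.2.2, by omega⟩)
    · exact Or.inr (Or.inl ⟨h.2.1, h.2.2, congrArg Fin.val h.1.symm⟩)
    · have := stepR_ne n (by omega) _ _ h
      rw [stepR_iff n (by omega)] at h
      exact Or.inr (Or.inr ⟨this.2.2, this.2.1, by omega⟩)
  intro v x y h1 h2 h3
  have k1 := key _ _ h1
  have k2 := key _ _ h2
  have k3 := key _ _ h3
  have := v.1.2
  have := x.1.2
  have := y.1.2
  clear key h1 h2 h3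
  by_cases a : v.2 = 0 <;> by_cases b : x.2 = 0 <;> by_cases c : y.2 = 0 <;>
    simp only [a, b, c, not_true_eq_false, ne_eq, not_false_eq_true, true_and, false_and,
      and_false, or_false, false_or] at k1 k2 k3 <;> omega

/-- A labelled copy. -/
structure Col where
  a : Lab
  b : Lab
  c : Lab
  d : Lab

namespace Col
open Lab

def get (x : Col) (k : Fin 4) : Lab := ![x.a, x.b, x.c, x.d] k

def wt (x : Col) : ℕ := x.a.isS.toNat + x.b.isS.toNat + x.c.isS.toNat + x.d.isS.toNat

def swp (x : Col) : Col := ⟨x.a, x.b, x.d, x.c⟩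

def ok (x : Col) : Bool := okv x.a x.b x.c x.d

def ok3 (l c r : Col) : Bool :=
  okv c.b c.a l.b r.b && okv c.c c.a l.c r.c && okv c.d c.a l.d r.d

/-- necessary condition with one neighbour unknown -/
def okr (l x y : Lab) : Bool := okv l x A y || okv l x B y || okv l x P y || okv l x D y

def okL (l c : Col) : Bool := okr l.b l.a c.b && okr l.c l.a c.c && okr l.d l.a c.d

theorem okr_of : ∀ l x u y : Lab, okv l x u y = true → okr l x y = true := by decide
theorem okv_comm : ∀ l x u y : Lab, okv l x u y = okv l x y u := by decide

theorem okL_of (x l c : Col) (h : ok3 x l c = true) : okL l c = true := by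
  simp only [ok3, okL, Bool.and_eq_true] at *
  exact ⟨⟨okr_of _ _ _ _ h.1.1, okr_of _ _ _ _ h.1.2⟩, okr_of _ _ _ _ h.2⟩

theorem okR_of (l c y : Col) (h : ok3 l c y = true) : okL c l = true := by
  simp only [ok3, okL, Bool.and_eq_true] at *
  rw [okv_comm, okv_comm c.c, okv_comm c.d] at h
  exact ⟨⟨okr_of _ _ _ _ h.1.1, okr_of _ _ _ _ h.1.2⟩, okr_of _ _ _ _ h.2⟩

def W1 : List Col := [
  ⟨A, D, D, D⟩, ⟨B, P, D, D⟩, ⟨B, D, P, D⟩, ⟨B, D, D, P⟩, ⟨B, D, D, D⟩, ⟨P, B, P, P⟩,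
  ⟨P, B, P, D⟩, ⟨P, B, D, P⟩, ⟨P, B, D, D⟩, ⟨P, P, B, P⟩, ⟨P, P, B, D⟩, ⟨P, P, P, B⟩,
  ⟨P, P, D, B⟩, ⟨P, D, B, P⟩, ⟨P, D, B, D⟩, ⟨P, D, P, B⟩, ⟨P, D, D, B⟩]

def W2 : List Col := [
  ⟨A, A, D, D⟩, ⟨A, B, D, D⟩, ⟨A, D, A, D⟩, ⟨A, D, B, D⟩, ⟨A, D, D, A⟩, ⟨A, D, D, B⟩,
  ⟨B, A, P, D⟩, ⟨B, A, D, P⟩, ⟨B, A, D, D⟩, ⟨B, B, P, D⟩, ⟨B, B, D, P⟩, ⟨B, B, D, D⟩,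
  ⟨B, P, A, D⟩, ⟨B, P, B, D⟩, ⟨B, P, D, A⟩, ⟨B, P, D, B⟩, ⟨B, D, A, P⟩, ⟨B, D, A, D⟩,
  ⟨B, D, B, P⟩, ⟨B, D, B, D⟩, ⟨B, D, P, A⟩, ⟨B, D, P, B⟩, ⟨B, D, D, A⟩, ⟨B, D, D, B⟩,
  ⟨D, A, A, P⟩, ⟨D, A, A, D⟩, ⟨D, A, B, P⟩, ⟨D, A, B, D⟩, ⟨D, A, P, A⟩, ⟨D, A, P, B⟩,
  ⟨D, A, D, A⟩, ⟨D, A, D, B⟩, ⟨D, B, A, P⟩, ⟨D, B, A, D⟩, ⟨D, B, P, A⟩, ⟨D, B, D, A⟩,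
  ⟨D, P, A, A⟩, ⟨D, P, A, B⟩, ⟨D, P, B, A⟩, ⟨D, D, A, A⟩, ⟨D, D, A, B⟩, ⟨D, D, B, A⟩]

theorem wt_pos : ∀ a b c d : Lab, ok ⟨a, b, c, d⟩ = true → 1 ≤ wt ⟨a, b, c, d⟩ := by
  intro a b c d; cases a <;> cases b <;> cases c <;> cases d <;> decide

theorem mem_W1 (x : Col) (h : ok x = true) (hw : wt x = 1) : x ∈ W1 := by
  obtain ⟨a, b, c, d⟩ := x
  cases a <;> cases b <;> cases c <;> cases d <;>
    first
    | exact absurd hw (by decide)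
    | exact absurd h (by decide)
    | (simp only [W1, List.mem_cons]; simp)

theorem mem_W2 (x : Col) (h : ok x = true) (hw : wt x = 2) : x ∈ W2 := by
  obtain ⟨a, b, c, d⟩ := x
  cases a <;> cases b <;> cases c <;> cases d <;>
    first
    | exact absurd hw (by decide)
    | exact absurd h (by decide)
    | (simp only [W2, List.mem_cons]; simp)

def ext : List (List Col) → (List Col → Bool) → Col → Col → Bool
  | [], fin, _, _ => fin []
  | C :: rest, fin, l, c =>
    C.all fun r => bif ok3 l c r && okL r c then ext rest (fun t => fin (r :: t)) c r else true

def srch (C0 C1 : List Col) (ls : List (List Col)) (fin : List Col → Bool) : Bool :=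
  C0.all fun l => C1.all fun c =>
    bif okL l c && okL c l then ext ls (fun t => fin (l :: c :: t)) l c else true

def win (col : ℕ → Col) : ℕ → ℕ → List Col
  | _, 0 => []
  | i, m + 1 => col i :: win col (i + 1) m

def memw (col : ℕ → Col) : ℕ → List (List Col) → Prop
  | _, [] => True
  | i, C :: rest => col i ∈ C ∧ memw col (i + 1) rest

theorem ext_sound (col : ℕ → Col) (h3 : ∀ i, ok3 (col i) (col (i + 1)) (col (i + 2)) = true) :
    ∀ (ls : List (List Col)) (fin : List Col → Bool) (i : ℕ),
      ext ls fin (col i) (col (i + 1)) = true → memw col (i + 2) ls →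
      fin (win col (i + 2) ls.length) = true := by
  intro ls
  induction ls with
  | nil => intro fin i h _; exact h
  | cons C rest ih =>
    intro fin i h hm
    obtain ⟨m1, m2⟩ := hm
    simp only [ext, List.all_eq_true] at h
    have := h _ m1
    rw [h3 i, okR_of _ _ _ (h3 (i + 1))] at this
    exact ih _ (i + 1) this m2

theorem srch_sound (col : ℕ → Col) (h3 : ∀ i, ok3 (col i) (col (i + 1)) (col (i + 2)) = true)
    (C0 C1 : List Col) (ls : List (List Col)) (fin : List Col → Bool) (i : ℕ)
    (h : srch C0 C1 ls fin = true) (hm : memw col (i + 1) (C0 :: C1 :: ls)) :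
    fin (win col (i + 1) (ls.length + 2)) = true := by
  obtain ⟨m0, m1, m2⟩ := hm
  simp only [srch, List.all_eq_true] at h
  have := h _ m0 _ m1
  rw [okL_of _ _ _ (h3 i), okR_of _ _ _ (h3 (i + 1))] at this
  exact ext_sound col h3 ls _ (i + 1) this m2

def fF : List Col → Bool := fun _ => false

def leq (x y : Lab) : Bool :=
  match x, y with
  | A, A => true
  | B, B => true
  | P, P => true
  | D, D => true
  | _, _ => false

theorem leq_eq : ∀ x y, leq x y = true → x = y := by decide
theorem leq_ne : ∀ x y, leq x y = false → x ≠ y := by decide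

def fE : List Col → Bool
  | _ :: x :: _ :: _ :: _ :: y :: _ =>
    leq x.a y.a && leq x.b y.b && leq x.c y.c && leq x.d y.d && !(leq x.c x.d)
  | _ => false

theorem s111 : srch W1 W1 [W1] fF = true := by decide +kernel
theorem s1121 : srch W1 W1 [W2, W1] fF = true := by decide +kernel
theorem s1211 : srch W1 W2 [W1, W1] fF = true := by decide +kernel
theorem s1212121 : srch W1 W2 [W1, W2, W1, W2, W1] fF = true := by decide +kernel
theorem s21122112 : srch W2 W1 [W1, W2, W2, W1, W1, W2] fE = true := by decide +kernel

end Col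

theorem ncard_lab (n : ℕ) (f : FV n → Lab) : {v : FV n | (f v).isS = true}.ncard =
    ∑ i : Fin n, Col.wt ⟨f (i, 0), f (i, 1), f (i, 2), f (i, 3)⟩ := by
  classical
  rw [Set.ncard_eq_toFinset_card', Set.toFinset_ofPred, Finset.card_filter, Fintype.sum_prod_type]
  refine Finset.sum_congr rfl fun i _ => ?_
  rw [Fin.sum_univ_four]
  simp only [Col.wt, Bool.toNat]
  cases (f (i, 0)).isS <;> cases (f (i, 1)).isS <;> cases (f (i, 2)).isS <;>
    cases (f (i, 3)).isS <;> rfl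

theorem sum_shift (n : ℕ) (V : ℕ → ℕ) (hper : ∀ i, V (i + n) = V i) (t : ℕ) :
    ∑ i ∈ Finset.range n, V (i + t) = ∑ i ∈ Finset.range n, V i := by
  induction t with
  | zero => rfl
  | succ t ih =>
    have h1 := Finset.sum_range_succ (fun i => V (i + t)) n
    have h2 := Finset.sum_range_succ' (fun i => V (i + t)) n
    have h3 : V (n + t) = V (0 + t) := by rw [Nat.add_comm n t, hper]; simp
    have h4 : ∀ i, V (i + 1 + t) = V (i + (t + 1)) := by intro i; congr 1; omega
    simp only [h4] at h2
    omega

/-- potential -/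
def potf (x y z : ℕ) : ℤ :=
  if y = 1 ∧ z = 1 then -2 else if z = 1 then -1 else if x = 1 ∧ y = 1 ∧ z = 2 then -1 else 0

def pot (V : ℕ → ℕ) (i : ℕ) : ℤ := potf (V i) (V (i + 1)) (V (i + 2))

theorem potf_step (x0 x1 x2 x3 : ℕ) (d : 1 ≤ x3)
    (b : ¬ (x1 = 1 ∧ x2 = 1 ∧ x3 = 1))
    (c : ¬ (x0 = 1 ∧ x1 = 1 ∧ x2 = 2 ∧ x3 = 1)) : potf x1 x2 x3 ≤ potf x0 x1 x2 + 2 * x3 - 3 := by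
  unfold potf
  split_ifs <;> omega

theorem potf_tight (x0 x1 x2 x3 : ℕ) (d : 1 ≤ x3)
    (h : potf x1 x2 x3 = potf x0 x1 x2 + 2 * x3 - 3) :
    (x1 = 1 ∧ x2 = 1 → x3 = 2) ∧ (x1 ≠ 1 ∧ x2 = 1 → x3 = 1 ∨ x3 = 2) ∧
      (x0 = 1 ∧ x1 = 1 ∧ x2 = 2 → x3 = 2) ∧
      (x2 ≠ 1 ∧ ¬ (x0 = 1 ∧ x1 = 1 ∧ x2 = 2) → x3 = 1) := by
  unfold potf at h
  split_ifs at h <;> omega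

set_option maxHeartbeats 1000000 in
theorem comb (n : ℕ) (hn : 0 < n) (V : ℕ → ℕ) (hper : ∀ i, V (i + n) = V i) (hpos : ∀ i, 1 ≤ V i)
    (h111 : ∀ i, ¬ (V i = 1 ∧ V (i + 1) = 1 ∧ V (i + 2) = 1))
    (h1121 : ∀ i, ¬ (V i = 1 ∧ V (i + 1) = 1 ∧ V (i + 2) = 2 ∧ V (i + 3) = 1))
    (h1211 : ∀ i, ¬ (V i = 1 ∧ V (i + 1) = 2 ∧ V (i + 2) = 1 ∧ V (i + 3) = 1))
    (h12 : ∀ i, ¬ (V i = 1 ∧ V (i + 1) = 2 ∧ V (i + 2) = 1 ∧ V (i + 3) = 2 ∧ V (i + 4) = 1 ∧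
      V (i + 5) = 2 ∧ V (i + 6) = 1)) :
    3 * n + 1 ≤ 2 * ∑ i ∈ Finset.range n, V i ∨ (∃ k, n = 4 * k) ∧ ∃ i0, ∀ m,
      V (i0 + 4 * m) = 1 ∧ V (i0 + 4 * m + 1) = 1 ∧ V (i0 + 4 * m + 2) = 2 ∧
      V (i0 + 4 * m + 3) = 2 := by
  have step : ∀ i, pot V (i + 1) ≤ pot V i + 2 * V (i + 3) - 3 := by
    intro i
    exact potf_step _ _ _ _ (hpos _) (h111 (i + 1)) (h1121 i)
  have pper : ∀ i, pot V (i + n) = pot V i := by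
    intro i
    have e1 := hper (i + 1)
    have e2 := hper (i + 2)
    rw [show i + 1 + n = i + n + 1 by omega] at e1
    rw [show i + 2 + n = i + n + 2 by omega] at e2
    simp only [pot, hper, e1, e2]
  have tele : ∀ t, ∑ i ∈ Finset.range n,
      (pot V (i + t) + 2 * (V (i + t + 3) : ℤ) - 3 - pot V (i + t + 1)) =
      2 * ((∑ i ∈ Finset.range n, V i : ℕ) : ℤ) - 3 * n := by
    intro t
    have e1 := Finset.sum_range_sub (fun i => pot V (i + t)) n
    have e2 : pot V (n + t) = pot V (0 + t) := by rw [Nat.add_comm n t, pper]; simp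
    rw [← sum_shift n V hper (t + 3)]
    push_cast
    have e3 : ∀ i, pot V (i + t) + 2 * (V (i + t + 3) : ℤ) - 3 - pot V (i + t + 1) =
        2 * (V (i + (t + 3)) : ℤ) - 3 - (pot V (i + 1 + t) - pot V (i + t)) := by
      intro i
      rw [show i + 1 + t = i + t + 1 by omega, show i + (t + 3) = i + t + 3 by omega]; ring
    simp only [e3]
    rw [Finset.sum_sub_distrib, e1, e2, Finset.sum_sub_distrib, ← Finset.mul_sum]
    simp
    ring
  have nonneg : ∀ t i, 0 ≤ pot V (i + t) + 2 * (V (i + t + 3) : ℤ) - 3 - pot V (i + t + 1) := by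
    intro t i
    have := step (i + t)
    omega
  rcases Nat.lt_or_ge (3 * n) (2 * ∑ i ∈ Finset.range n, V i) with hlt | hge
  · left; omega
  right
  have hle : (3 * n : ℤ) ≤ 2 * ((∑ i ∈ Finset.range n, V i : ℕ) : ℤ) := by
    have h := Finset.sum_nonneg (s := Finset.range n) (fun i _ => nonneg 0 i)
    rw [tele 0] at h
    omega
  have heq : 2 * ((∑ i ∈ Finset.range n, V i : ℕ) : ℤ) - 3 * n = 0 := by omega
  have tight : ∀ i, pot V (i + 1) = pot V i + 2 * V (i + 3) - 3 := by
    intro t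
    have h := tele t
    rw [heq, Finset.sum_eq_zero_iff_of_nonneg (fun i _ => nonneg t i)] at h
    have := h 0 (by simp; omega)
    simp only [Nat.zero_add] at this
    omega
  have hev : n % 2 = 0 := by omega
  clear tele nonneg hle heq step pper
  have T : ∀ i, (V (i + 1) = 1 ∧ V (i + 2) = 1 → V (i + 3) = 2) ∧
      (V (i + 1) ≠ 1 ∧ V (i + 2) = 1 → V (i + 3) = 1 ∨ V (i + 3) = 2) ∧
      (V i = 1 ∧ V (i + 1) = 1 ∧ V (i + 2) = 2 → V (i + 3) = 2) ∧
      (V (i + 2) ≠ 1 ∧ ¬ (V i = 1 ∧ V (i + 1) = 1 ∧ V (i + 2) = 2) → V (i + 3) = 1) := by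
    intro i
    exact potf_tight _ _ _ _ (hpos _) (tight i)
  clear tight
  have no121 : ∀ i, ¬ (V i = 1 ∧ V (i + 1) = 2 ∧ V (i + 2) = 1) := by
    rintro i ⟨v0, v1, v2⟩
    have v3 : V (i + 3) = 2 :=
      ((T i).2.1 ⟨by omega, v2⟩).resolve_left (fun h => h1211 i ⟨v0, v1, v2, h⟩)
    have v4 : V (i + 4) = 1 := (T (i + 1)).2.2.2
      ⟨fun h => by have h : V (i + 3) = 1 := h; omega, fun h => by have := h.1; omega⟩
    have v5 : V (i + 5) = 2 :=
      ((T (i + 2)).2.1 ⟨fun h => by have h : V (i + 3) = 1 := h; omega, v4⟩).resolve_left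
        (fun h => h1211 (i + 2) ⟨v2, v3, v4, h⟩)
    have v6 : V (i + 6) = 1 := (T (i + 3)).2.2.2
      ⟨fun h => by have h : V (i + 5) = 1 := h; omega, fun h => by have := h.1; omega⟩
    exact h12 i ⟨v0, v1, v2, v3, v4, v5, v6⟩
  have ex11 : ∃ i, V (i + 1) = 1 ∧ V (i + 2) = 1 := by
    by_contra hc
    have hc' : ∀ i, V (i + 1) = 1 → V (i + 2) = 1 → False := fun i a b => hc ⟨i, a, b⟩
    have after1 : ∀ i, V (i + 2) = 1 → V (i + 3) = 2 := fun i h =>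
      ((T i).2.1 ⟨fun h' => hc' i h' h, h⟩).resolve_left (fun h' => hc' (i + 1) h h')
    have after2 : ∀ i, V (i + 3) ≠ 1 → V (i + 4) = 1 := fun i h =>
      (T (i + 1)).2.2.2 ⟨h, fun h' => hc' i h'.1 h'.2.1⟩
    have fin : ∀ i, V (i + 2) = 1 → False := by
      intro i v2
      have v3 := after1 i v2
      have v4 := after2 i (by omega)
      exact no121 (i + 2) ⟨v2, v3, v4⟩
    exact fin 2 (after2 0 (fin 1))
  have nxt : ∀ i, V (i + 1) = 1 ∧ V (i + 2) = 1 → V (i + 3) = 2 ∧ V (i + 4) = 2 ∧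
      V (i + 5) = 1 ∧ V (i + 6) = 1 := by
    rintro i ⟨v1, v2⟩
    have v3 : V (i + 3) = 2 := (T i).1 ⟨v1, v2⟩
    have v4 : V (i + 4) = 2 := (T (i + 1)).2.2.1 ⟨v1, v2, v3⟩
    have v5 : V (i + 5) = 1 := (T (i + 2)).2.2.2
      ⟨fun h => by have h : V (i + 4) = 1 := h; omega,
        fun h => by have h : V (i + 3) = 1 := h.2.1; omega⟩
    refine ⟨v3, v4, v5, ?_⟩
    refine ((T (i + 3)).2.1 ⟨fun h => by have h : V (i + 4) = 1 := h; omega, v5⟩).resolve_right ?_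
    intro v6
    have v6 : V (i + 6) = 2 := v6
    have v7 : V (i + 7) = 1 := (T (i + 4)).2.2.2
      ⟨fun h => by have h : V (i + 6) = 1 := h; omega, fun h => by have := h.1; omega⟩
    exact no121 (i + 5) ⟨v5, v6, v7⟩
  obtain ⟨j, hj⟩ := ex11
  have all : ∀ m, V (j + 1 + 4 * m) = 1 ∧ V (j + 1 + 4 * m + 1) = 1 := by
    intro m
    induction m with
    | zero => exact hj
    | succ m ih =>
      have := nxt (j + 4 * m) ⟨by rw [← ih.1]; congr 1; omega, by rw [← ih.2]; congr 1; omega⟩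
      exact ⟨by rw [← this.2.2.1]; congr 1; omega, by rw [← this.2.2.2]; congr 1; omega⟩
  have all4 : ∀ m, V (j + 1 + 4 * m) = 1 ∧ V (j + 1 + 4 * m + 1) = 1 ∧ V (j + 1 + 4 * m + 2) = 2 ∧
      V (j + 1 + 4 * m + 3) = 2 := by
    intro m
    have ih := all m
    have := nxt (j + 4 * m) ⟨by rw [← ih.1]; congr 1; omega, by rw [← ih.2]; congr 1; omega⟩
    exact ⟨ih.1, ih.2, by rw [← this.1]; congr 1; omega, by rw [← this.2.1]; congr 1; omega⟩
  refine ⟨?_, j + 1, all4⟩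
  rcases (by omega : n % 4 = 0 ∨ n % 4 = 2) with h | h
  · exact ⟨n / 4, by omega⟩
  · exfalso
    have e1 := hper (j + 1)
    have e2 := (all4 (n / 4)).2.2.1
    have e3 := (all4 0).1
    rw [show j + 1 + 4 * (n / 4) + 2 = j + 1 + n by omega] at e2
    simp only [Nat.mul_zero, Nat.add_zero] at e3
    omega

noncomputable def colS (n : ℕ) (hn : 0 < n) (S : Set (FV n)) (i : ℕ) : Col :=
  ⟨labV n S (cv n hn i 0), labV n S (cv n hn i 1), labV n S (cv n hn i 2), labV n S (cv n hn i 3)⟩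

theorem lower4 (n : ℕ) (hn : 4 ≤ n) (S : Set (FV n)) (hS : SecureDominating n S) :
    3 * n + 1 ≤ 2 * S.ncard := by
  have h0 : 0 < n := by omega
  have lok := labV_okv n S hS (no_tri n hn)
  set col := colS n h0 S with hcol
  have hok : ∀ i, (col i).ok = true := fun i => lok _ _ _ _ (nb_a n (by omega) i)
  have h3 : ∀ i, Col.ok3 (col i) (col (i + 1)) (col (i + 2)) = true := by
    intro i
    simp only [Col.ok3, Bool.and_eq_true]
    exact ⟨⟨lok _ _ _ _ (nb_k n (by omega) i 1 (by decide)),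
      lok _ _ _ _ (nb_k n (by omega) i 2 (by decide))⟩,
      lok _ _ _ _ (nb_k n (by omega) i 3 (by decide))⟩
  have hper : ∀ i, col (i + n) = (col i).swp := by
    intro i
    simp only [hcol, colS, Col.swp, cv_add]
    rfl
  have hcard : S.ncard = ∑ i ∈ Finset.range n, (col i).wt := by
    have e : S = {v | (labV n S v).isS = true} := by
      ext v; simp only [Set.mem_ofPred_eq, labV_isS]
    rw [Finset.sum_range]
    conv_lhs => rw [e]
    rw [ncard_lab]
    refine Finset.sum_congr rfl fun i _ => ?_
    simp only [hcol, colS, cv_small]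
  have hwper : ∀ i, (col (i + n)).wt = (col i).wt := by
    intro i; rw [hper]; simp only [Col.wt, Col.swp]; omega
  have m1 : ∀ i, (col i).wt = 1 → col i ∈ Col.W1 := fun i h => Col.mem_W1 _ (hok i) h
  have m2 : ∀ i, (col i).wt = 2 → col i ∈ Col.W2 := fun i h => Col.mem_W2 _ (hok i) h
  have key := comb n h0 (fun i => (col (i + 1)).wt)
    (fun i => by
      have := hwper (i + 1)
      rw [show i + 1 + n = i + n + 1 by omega] at this
      exact this)
    (fun i => Col.wt_pos _ _ _ _ (hok (i + 1)))
    (fun i ⟨a, b, c⟩ => absurd (Col.srch_sound col h3 _ _ _ _ i Col.s111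
      ⟨m1 _ a, m1 _ b, m1 _ c, trivial⟩) (by simp [Col.fF]))
    (fun i ⟨a, b, c, d⟩ => absurd (Col.srch_sound col h3 _ _ _ _ i Col.s1121
      ⟨m1 _ a, m1 _ b, m2 _ c, m1 _ d, trivial⟩) (by simp [Col.fF]))
    (fun i ⟨a, b, c, d⟩ => absurd (Col.srch_sound col h3 _ _ _ _ i Col.s1211
      ⟨m1 _ a, m2 _ b, m1 _ c, m1 _ d, trivial⟩) (by simp [Col.fF]))
    (fun i ⟨a, b, c, d, e, f, g⟩ => absurd (Col.srch_sound col h3 _ _ _ _ i Col.s1212121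
      ⟨m1 _ a, m2 _ b, m1 _ c, m2 _ d, m1 _ e, m2 _ f, m1 _ g, trivial⟩) (by simp [Col.fF]))
  have hsh := sum_shift n (fun i => (col i).wt) hwper 1
  rw [hsh, ← hcard] at key
  rcases key with key | ⟨⟨k, hk⟩, i0, h⟩
  · exact key
  exfalso
  have per4 : ∀ m, col (i0 + 4 * m + 5) = col (i0 + 4 * m + 9) ∧
      (col (i0 + 4 * m + 5)).c ≠ (col (i0 + 4 * m + 5)).d := by
    intro m
    have a := h m
    have b := h (m + 1)
    have c := h (m + 2)
    simp only [show i0 + 4 * (m + 1) = i0 + 4 * m + 4 by omega,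
      show i0 + 4 * (m + 2) = i0 + 4 * m + 8 by omega] at b c
    have := Col.srch_sound col h3 _ _ _ _ (i0 + 4 * m + 3) Col.s21122112
      ⟨m2 _ a.2.2.2, m1 _ b.1, m1 _ b.2.1, m2 _ b.2.2.1, m2 _ b.2.2.2, m1 _ c.1, m1 _ c.2.1,
        m2 _ c.2.2.1, trivial⟩
    simp only [List.length, Col.win, Col.fE, Bool.and_eq_true, Bool.not_eq_true',
      Nat.add_assoc, Nat.reduceAdd] at this
    simp only [Nat.add_assoc]
    obtain ⟨⟨⟨⟨x1, x2⟩, x3⟩, x4⟩, x5⟩ := this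
    refine ⟨?_, Col.leq_ne _ _ x5⟩
    have y1 := Col.leq_eq _ _ x1
    have y2 := Col.leq_eq _ _ x2
    have y3 := Col.leq_eq _ _ x3
    have y4 := Col.leq_eq _ _ x4
    revert y1 y2 y3 y4
    generalize col (i0 + (4 * m + 5)) = X
    generalize col (i0 + (4 * m + 9)) = Y
    intro y1 y2 y3 y4
    cases X; cases Y
    simp_all
  have pk : ∀ m, col (i0 + 4 * m + 5) = col (i0 + 5) := by
    intro m
    induction m with
    | zero => rfl
    | succ m ih =>
      rw [← ih, (per4 m).1]; congr 1
  have e1 := pk k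
  have e2 := hper (i0 + 5)
  rw [show i0 + 5 + n = i0 + 4 * k + 5 by omega, e1] at e2
  have e3 := (per4 0).2
  simp only [Nat.mul_zero, Nat.add_zero] at e3
  apply e3
  have := congrArg Col.c e2
  exact this

namespace Col
open Lab

def blk : ℕ → Col
  | 0 => ⟨P, P, B, D⟩
  | 1 => ⟨P, P, D, B⟩
  | 2 => ⟨D, B, A, D⟩
  | _ => ⟨D, B, D, A⟩

def pat (u : List Col) (i : ℕ) : Col := u.getD i (blk ((i - u.length) % 4))

theorem pat_ge (u : List Col) (j : ℕ) : pat u (u.length + j) = blk (j % 4) := by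
  unfold pat
  rw [List.getD_eq_default _ _ (by omega)]
  congr 2
  omega

theorem ok3_swp (l c r : Col) : ok3 l.swp c.swp r.swp = ok3 l c r := by
  simp only [ok3, swp]
  rw [Bool.and_assoc, Bool.and_assoc, Bool.and_comm (okv c.d _ _ _)]

theorem swp_swp (c : Col) : c.swp.swp = c := rfl

theorem ok_swp : ∀ a b c d : Lab, okv a b d c = okv a b c d := by decide

theorem get_sw4 (c : Col) (k : Fin 4) : c.get (sw4 k) = c.swp.get k := by
  fin_cases k <;> rfl

end Col

theorem secure_pat (n : ℕ) (hn : 3 ≤ n) (p : ℕ → Col) (hok : ∀ i < n, (p i).ok = true)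
    (h1 : ∀ i, i + 2 < n → Col.ok3 (p i) (p (i + 1)) (p (i + 2)) = true)
    (h2 : Col.ok3 (p (n - 1)) (p 0).swp (p 1).swp = true)
    (h3 : Col.ok3 (p (n - 2)) (p (n - 1)) (p 0).swp = true) :
    SecureDominating n {v : FV n | ((p v.1).get v.2).isS = true} := by
  have h0 : 0 < n := by omega
  obtain ⟨f, hf⟩ : ∃ f : FV n → Lab, ∀ v, f v = (p v.1).get v.2 := ⟨fun v => (p v.1).get v.2, fun _ => rfl⟩
  suffices hmain : SecureDominating n {v : FV n | (f v).isS = true} by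
    simpa only [hf] using hmain
  apply secure_of_lab n f
  have q0 : ∀ i < n, ∀ k, f (cv n h0 i k) = (p i).get k := by
    intro i hi k
    have := cv_small n h0 ⟨i, hi⟩ k
    simp only at this
    rw [this, hf]
  have q1 : ∀ i < n, ∀ k, f (cv n h0 (i + n) k) =
      (p i).swp.get k := by
    intro i hi k
    rw [cv_add, q0 i hi, Col.get_sw4]
  have q2 : ∀ i < n, ∀ k, f (cv n h0 (i + n + n) k) =
      (p i).get k := by
    intro i hi k
    rw [cv_add, q1 i hi, Col.get_sw4, Col.swp_swp]
  intro v
  obtain ⟨j, k, hj, hv⟩ : ∃ j k, j < n ∧ v = cv n h0 (j + n) k :=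
    ⟨v.1, sw4 v.2, v.1.2, by rw [cv_add, sw4_sw4, cv_small]⟩
  subst hv
  by_cases hk : k = 0
  · subst hk
    refine ⟨_, _, _, nb_a n (by omega) _, ?_⟩
    rw [q1 j hj, q1 j hj, q1 j hj, q1 j hj]
    have := hok j hj
    rw [Col.ok, ← Col.ok_swp] at this
    exact this
  · obtain ⟨l, r, hl, hr, h⟩ : ∃ l r : Col,
        (∀ k, f (cv n h0 (j + n - 1) k) = l.get k) ∧
        (∀ k, f (cv n h0 (j + n - 1 + 2) k) = r.get k) ∧
        Col.ok3 l (p j).swp r = true := by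
      rcases Nat.eq_zero_or_pos j with rfl | hj0
      · refine ⟨p (n - 1), (p 1).swp, ?_, ?_, h2⟩
        · intro k
          rw [Nat.zero_add]
          exact q0 (n - 1) (by omega) k
        · intro k
          rw [show 0 + n - 1 + 2 = 1 + n by omega]
          exact q1 1 (by omega) k
      · by_cases hj1 : j + 1 = n
        · refine ⟨(p (j - 1)).swp, (p 0), ?_, ?_, ?_⟩
          · intro k
            rw [show j + n - 1 = (j - 1) + n by omega]
            exact q1 _ (by omega) k
          · intro k
            rw [show j + n - 1 + 2 = 0 + n + n by omega]
            exact q2 _ (by omega) k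
          · rw [show n - 2 = j - 1 by omega, show n - 1 = j by omega] at h3
            rw [← h3, ← Col.ok3_swp (p (j - 1)) (p j), Col.swp_swp]
        · refine ⟨(p (j - 1)).swp, (p (j + 1)).swp, ?_, ?_, ?_⟩
          · intro k
            rw [show j + n - 1 = (j - 1) + n by omega]
            exact q1 _ (by omega) k
          · intro k
            rw [show j + n - 1 + 2 = j + 1 + n by omega]
            exact q1 _ (by omega) k
          · have := h1 (j - 1) (by omega)
            rw [show j - 1 + 1 = j by omega, show j - 1 + 2 = j + 1 by omega] at this
            rw [Col.ok3_swp, this]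
    have hnb := nb_k n hn (j + n - 1) k hk
    rw [show j + n - 1 + 1 = j + n by omega] at hnb
    refine ⟨_, _, _, hnb, ?_⟩
    rw [q1 j hj, q1 j hj, hl, hr]
    simp only [Col.ok3, Bool.and_eq_true] at h
    clear hnb hl hr q0 q1 q2 hf h1 h2 h3 hok
    fin_cases k
    · exact absurd rfl hk
    · exact h.1.1
    · exact h.1.2
    · exact h.2

theorem upper_aux (u : List Col) (hr : 3 ≤ u.length)
    (hok : ∀ i < u.length, (Col.pat u i).ok = true)
    (h1 : ∀ i < u.length, Col.ok3 (Col.pat u i) (Col.pat u (i + 1)) (Col.pat u (i + 2)) = true)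
    (h2 : Col.ok3 (Col.pat u (u.length - 1)) (Col.pat u 0).swp (Col.pat u 1).swp = true)
    (h3 : Col.ok3 (Col.pat u (u.length - 2)) (Col.pat u (u.length - 1)) (Col.pat u 0).swp = true)
    (h2' : Col.ok3 (Col.blk 3) (Col.pat u 0).swp (Col.pat u 1).swp = true)
    (h3' : Col.ok3 (Col.blk 2) (Col.blk 3) (Col.pat u 0).swp = true) (k : ℕ) :
    ∃ S : Set (FV (u.length + 4 * k)), SecureDominating (u.length + 4 * k) S ∧
      S.ncard = ∑ i ∈ Finset.range u.length, (Col.pat u i).wt + 6 * k := by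
  refine ⟨_, secure_pat (u.length + 4 * k) (by omega) (Col.pat u) ?_ ?_ ?_ ?_, ?_⟩
  · intro i _
    rcases Nat.lt_or_ge i u.length with h | h
    · exact hok i h
    · obtain ⟨j, rfl⟩ := Nat.exists_eq_add_of_le h
      rw [Col.pat_ge]
      have : j % 4 < 4 := Nat.mod_lt _ (by omega)
      interval_cases j % 4 <;> rfl
  · intro i _
    rcases Nat.lt_or_ge i u.length with h | h
    · exact h1 i h
    · obtain ⟨j, rfl⟩ := Nat.exists_eq_add_of_le h
      rw [Nat.add_assoc, Nat.add_assoc, Col.pat_ge, Col.pat_ge, Col.pat_ge, Nat.add_mod j 1,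
        Nat.add_mod j 2]
      have : j % 4 < 4 := Nat.mod_lt _ (by omega)
      interval_cases j % 4 <;> rfl
  · rcases Nat.eq_zero_or_pos k with rfl | hk
    · exact h2
    · rw [show u.length + 4 * k - 1 = u.length + (4 * k - 1) by omega, Col.pat_ge,
        show (4 * k - 1) % 4 = 3 by omega]
      exact h2'
  · rcases Nat.eq_zero_or_pos k with rfl | hk
    · exact h3
    · rw [show u.length + 4 * k - 1 = u.length + (4 * k - 1) by omega, Col.pat_ge,
        show u.length + 4 * k - 2 = u.length + (4 * k - 2) by omega, Col.pat_ge,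
        show (4 * k - 1) % 4 = 3 by omega, show (4 * k - 2) % 4 = 2 by omega]
      exact h3'
  · rw [ncard_lab (u.length + 4 * k) (fun v => (Col.pat u v.1).get v.2)]
    have e : ∀ m, ∑ i : Fin m, Col.wt ⟨(Col.pat u i).get 0, (Col.pat u i).get 1,
        (Col.pat u i).get 2, (Col.pat u i).get 3⟩ = ∑ i ∈ Finset.range m, (Col.pat u i).wt := by
      intro m
      rw [Finset.sum_range]
      rfl
    refine (e _).trans ?_
    induction k with
    | zero => rfl
    | succ k ih =>
      rw [show u.length + 4 * (k + 1) = u.length + 4 * k + 1 + 1 + 1 + 1 by omega,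
        Finset.sum_range_succ, Finset.sum_range_succ, Finset.sum_range_succ,
        Finset.sum_range_succ, ih]
      simp only [Nat.add_assoc, Col.pat_ge]
      rw [show 4 * k % 4 = 0 by omega, show (4 * k + 1) % 4 = 1 by omega,
        show (4 * k + (1 + 1)) % 4 = 2 by omega, show (4 * k + (1 + (1 + 1))) % 4 = 3 by omega]
      simp only [Col.blk, Col.wt, Lab.isS, Bool.toNat]
      simp
      omega

namespace Col
open Lab
def u3 : List Col := [⟨P, P, D, B⟩, ⟨A, D, A, D⟩, ⟨D, B, D, A⟩]
def u4 : List Col := [⟨P, P, D, B⟩, ⟨P, P, B, D⟩, ⟨D, B, D, A⟩, ⟨D, B, A, A⟩]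
def u5 : List Col := [⟨P, P, D, B⟩, ⟨P, P, B, D⟩, ⟨D, B, D, A⟩, ⟨A, D, A, D⟩, ⟨D, B, D, A⟩]
def u6 : List Col := [⟨P, P, D, B⟩, ⟨P, P, B, D⟩, ⟨D, B, D, A⟩, ⟨A, D, A, D⟩, ⟨A, D, D, D⟩,
  ⟨A, B, D, A⟩]
end Col

theorem upper (n : ℕ) (hn : 3 ≤ n) :
    ∃ S : Set (FV n), SecureDominating n S ∧ S.ncard = (3 * n) / 2 + 1 := by
  rcases (by omega : n % 4 = 3 ∨ n % 4 = 0 ∨ n % 4 = 1 ∨ n % 4 = 2) with h | h | h | h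
  · obtain ⟨S, h1, h2⟩ := upper_aux Col.u3 (by decide) (by decide) (by decide) rfl rfl rfl rfl
      ((n - 3) / 4)
    rw [show ∑ i ∈ Finset.range Col.u3.length, (Col.pat Col.u3 i).wt = 5 from rfl] at h2
    have e : Col.u3.length + 4 * ((n - 3) / 4) = n := by simp only [Col.u3, List.length]; omega
    revert S
    rw [e]
    intro S h1 h2
    exact ⟨S, h1, by omega⟩
  · obtain ⟨S, h1, h2⟩ := upper_aux Col.u4 (by decide) (by decide) (by decide) rfl rfl rfl rfl
      ((n - 4) / 4)
    rw [show ∑ i ∈ Finset.range Col.u4.length, (Col.pat Col.u4 i).wt = 7 from rfl] at h2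
    have e : Col.u4.length + 4 * ((n - 4) / 4) = n := by simp only [Col.u4, List.length]; omega
    revert S
    rw [e]
    intro S h1 h2
    exact ⟨S, h1, by omega⟩
  · obtain ⟨S, h1, h2⟩ := upper_aux Col.u5 (by decide) (by decide) (by decide) rfl rfl rfl rfl
      ((n - 5) / 4)
    rw [show ∑ i ∈ Finset.range Col.u5.length, (Col.pat Col.u5 i).wt = 8 from rfl] at h2
    have e : Col.u5.length + 4 * ((n - 5) / 4) = n := by simp only [Col.u5, List.length]; omega
    revert S
    rw [e]
    intro S h1 h2
    exact ⟨S, h1, by omega⟩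
  · obtain ⟨S, h1, h2⟩ := upper_aux Col.u6 (by decide) (by decide) (by decide) rfl rfl rfl rfl
      ((n - 6) / 4)
    rw [show ∑ i ∈ Finset.range Col.u6.length, (Col.pat Col.u6 i).wt = 10 from rfl] at h2
    have e : Col.u6.length + 4 * ((n - 6) / 4) = n := by simp only [Col.u6, List.length]; omega
    revert S
    rw [e]
    intro S h1 h2
    exact ⟨S, h1, by omega⟩

namespace J3

/-- neighbours in `J_3`, vertex `(i, k)` coded as `4 i + k` -/
def nb : ℕ → List ℕ
  | 0 => [1, 2, 3]
  | 1 => [0, 5, 9]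
  | 2 => [0, 6, 11]
  | 3 => [0, 7, 10]
  | 4 => [5, 6, 7]
  | 5 => [4, 1, 9]
  | 6 => [4, 2, 10]
  | 7 => [4, 3, 11]
  | 8 => [9, 10, 11]
  | 9 => [8, 5, 1]
  | 10 => [8, 6, 3]
  | _ => [8, 7, 2]

def V : List ℕ := [0, 1, 2, 3, 4, 5, 6, 7, 8, 9, 10, 11]

def dom (s : ℕ → Bool) : Bool := V.all fun v => s v || (nb v).any s

def sec (s : ℕ → Bool) : Bool := V.all fun v => s v || (nb v).any fun w =>
  s w && dom (fun x => x == v || (s x && !(x == w)))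

def allB : ℕ → ℕ → (List Bool → Bool) → Bool
  | 0, _, F => F []
  | m + 1, 0, F => allB m 0 (fun l => F (false :: l))
  | m + 1, c + 1, F => allB m (c + 1) (fun l => F (false :: l)) && allB m c (fun l => F (true :: l))

theorem allB_sound : ∀ m c F, allB m c F = true → ∀ l : List Bool, l.length = m →
    l.count true ≤ c → F l = true := by
  intro m
  induction m with
  | zero =>
    intro c F h l hl _
    rw [List.length_eq_zero_iff.1 hl]; exact h
  | succ m ih =>
    intro c F h l hl hc
    obtain _ | ⟨b, l⟩ := l
    · simp at hl
    have hl' : l.length = m := by simpa using hl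
    cases c with
    | zero =>
      cases b
      · exact ih 0 _ h l hl' (by simpa using hc)
      · simp at hc
    | succ c =>
      simp only [allB, Bool.and_eq_true] at h
      cases b
      · exact ih _ _ h.1 l hl' (by simpa using hc)
      · exact ih _ _ h.2 l hl' (by simpa using hc)

def get (l : List Bool) (i : ℕ) : Bool := l.getD i false

theorem search : allB 12 4 (fun l => !(dom (get l) && sec (get l))) = true := by decide +kernel

def e (x : ℕ) : FV 3 := (⟨x / 4 % 3, Nat.mod_lt _ (by omega)⟩, ⟨x % 4, Nat.mod_lt _ (by omega)⟩)

def c (v : FV 3) : ℕ := 4 * v.1 + v.2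

theorem adj_nb (v : FV 3) (w : FV 3) (h : (flowerSnark 3).Adj v w) : c w ∈ nb (c v) := by
  unfold flowerSnark at h
  rw [SimpleGraph.fromRel_adj] at h
  revert v w
  decide +kernel

theorem nb_adj (v : FV 3) (w : FV 3) (h : c w ∈ nb (c v)) : (flowerSnark 3).Adj v w := by
  unfold flowerSnark
  rw [SimpleGraph.fromRel_adj]
  revert v w
  decide +kernel

theorem c_inj : ∀ v w : FV 3, c v = c w → v = w := by
  intro v w h
  unfold c at h
  have := v.2.2
  have := w.2.2
  exact Prod.ext (by ext; omega) (by ext; omega)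

theorem c_mem (v : FV 3) : c v ∈ V := by
  revert v; decide

theorem mem_c : ∀ x ∈ V, ∃ v, x = c v := by
  have : ∀ x ∈ V, x = c (e x) := by decide
  exact fun x hx => ⟨e x, this x hx⟩

theorem dom_of (T : Set (FV 3)) (hT : Dominating 3 T) (s : ℕ → Bool)
    (hs : ∀ v, s (c v) = true ↔ v ∈ T) : dom s = true := by
  simp only [dom, List.all_eq_true, Bool.or_eq_true, List.any_eq_true]
  intro x hx
  obtain ⟨v, rfl⟩ := mem_c x hx
  by_cases h : v ∈ T
  · left; exact (hs v).2 h
  · right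
    obtain ⟨w, hw, ha⟩ := hT v h
    exact ⟨c w, adj_nb v w ha, (hs w).2 hw⟩

theorem lower3 (S : Set (FV 3)) (hS : SecureDominating 3 S) : 5 ≤ S.ncard := by
  classical
  by_contra hlt
  have h := allB_sound _ _ _ search (V.map fun x => decide (e x ∈ S)) (by simp [V]) (by
    have h1 : S.ncard = ∑ v : FV 3, if v ∈ S then 1 else 0 := by
      rw [Set.ncard_eq_toFinset_card', ← Finset.card_filter]
      congr 1
      ext v; simp
    rw [Fintype.sum_prod_type, Fin.sum_univ_three, Fin.sum_univ_four, Fin.sum_univ_four,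
      Fin.sum_univ_four] at h1
    have h2 : (V.map fun x => decide (e x ∈ S)).count true = S.ncard := by
      rw [h1]
      simp only [V, List.map, List.count_cons, List.count_nil, beq_iff_eq, decide_eq_true_eq]
      simp only [show e 0 = (0, 0) from rfl, show e 1 = (0, 1) from rfl, show e 2 = (0, 2) from rfl,
        show e 3 = (0, 3) from rfl, show e 4 = (1, 0) from rfl, show e 5 = (1, 1) from rfl,
        show e 6 = (1, 2) from rfl, show e 7 = (1, 3) from rfl, show e 8 = (2, 0) from rfl,
        show e 9 = (2, 1) from rfl, show e 10 = (2, 2) from rfl, show e 11 = (2, 3) from rfl]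
      ring
    omega)
  have hs : ∀ v, get (V.map fun x => decide (e x ∈ S)) (c v) = true ↔ v ∈ S := by
    intro v
    have : get (V.map fun x => decide (e x ∈ S)) (c v) = decide (v ∈ S) := by
      obtain ⟨i, k⟩ := v
      fin_cases i <;> fin_cases k <;> rfl
    rw [this, decide_eq_true_eq]
  generalize get (V.map fun x => decide (e x ∈ S)) = s at h hs
  rw [dom_of S hS.1 s hs, Bool.true_and, Bool.not_eq_true'] at h
  have : sec s = true := by
    simp only [sec, List.all_eq_true, Bool.or_eq_true, List.any_eq_true, Bool.and_eq_true]
    intro x hx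
    obtain ⟨v, rfl⟩ := mem_c x hx
    by_cases hv : v ∈ S
    · left; exact (hs v).2 hv
    · right
      obtain ⟨w, hw, ha, hd⟩ := hS.2 v hv
      refine ⟨c w, adj_nb v w ha, (hs w).2 hw, dom_of _ hd _ ?_⟩
      intro t
      have hc : ∀ a b : FV 3, c a = c b ↔ a = b := fun a b => ⟨c_inj a b, fun h => by rw [h]⟩
      simp [hs, hc]
  rw [this] at h
  exact absurd h (by decide)

end J3

/-- For every `n ≥ 3`, the secure domination number of the flower snark `J_n`
equals `⌈(3n+1)/2⌉`. -/
theorem flowerSnark_secureDomination (n : ℕ) (hn : 3 ≤ n) :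
    (secureDominationNumber n : ℤ) = ⌈(3 * (n : ℚ) + 1) / 2⌉ := by
  have hlow : ∀ S : Set (FV n), SecureDominating n S → 3 * n / 2 + 1 ≤ S.ncard := by
    intro S hS
    rcases Nat.lt_or_ge n 4 with h | h
    · obtain rfl : n = 3 := by omega
      exact J3.lower3 S hS
    · have := lower4 n h S hS
      omega
  have hval : secureDominationNumber n = 3 * n / 2 + 1 := by
    unfold secureDominationNumber
    apply le_antisymm
    · exact Nat.sInf_le (upper n hn)
    · obtain ⟨S, hS, hc⟩ := Nat.sInf_mem
        (s := {k | ∃ S : Set (FV n), SecureDominating n S ∧ S.ncard = k}) ⟨_, upper n hn⟩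
      rw [← hc]
      exact hlow S hS
  rw [hval]
  symm
  rw [Int.ceil_eq_iff]
  have h1 : 2 * (3 * n / 2 + 1) ≤ 3 * n + 2 := by omega
  have h2 : 3 * n + 1 ≤ 2 * (3 * n / 2 + 1) := by omega
  have h1q : (2 * ((3 * n / 2 + 1 : ℕ) : ℚ)) ≤ 3 * n + 2 := by exact_mod_cast h1
  have h2q : (3 * n + 1 : ℚ) ≤ 2 * ((3 * n / 2 + 1 : ℕ) : ℚ) := by exact_mod_cast h2
  rw [Int.cast_natCast]
  constructor <;> linarith
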